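/- Let ϑ₁, ϑ₂ be Beurling weights on ℝ^d and let 1 < p, q, r < ∞. Then A^{p,1,q,r}_{ϑ₁,ϑ₂}(ℝ^d) is a Banach algebra under convolution: there exists a constant C ≥ 1 such that for all f, g ∈ A^{p,1,q,r}_{ϑ₁,ϑ₂}(ℝ^d), the convolution f∗g belongs to A^{p,1,q,r}_{ϑ₁,ϑ₂}(ℝ^d) and ‖f∗g‖_A ≤ C·‖f‖_A·‖g‖_A. -/

import Mathlib

open MeasureTheory Filter Topology
open scoped ENNReal NNReal BigOperators

noncomputable section

/-- The unit cube `α + [0,1)^d` at the integer point `α ∈ ℤ^d`. -/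
def cube {d : ℕ} (α : Fin d → ℤ) : Set (Fin d → ℝ) :=
  Set.univ.pi fun i => Set.Ico (α i : ℝ) ((α i : ℝ) + 1)

/-- The weighted amalgam norm `‖f‖_{pq,ω}` of the space `(L^p_ω, ℓ^q)`. -/
def amalgamNorm {d : ℕ} (p q : ℝ) (ω : (Fin d → ℝ) → ℝ) (f : (Fin d → ℝ) → ℂ) : ℝ≥0∞ :=
  (∑' α : Fin d → ℤ,
      (eLpNorm (fun x => ω x • f x) (ENNReal.ofReal p) (volume.restrict (cube α))) ^ q) ^ (1 / q)

/-- Membership in the weighted amalgam space `(L^p_ω, ℓ^q)`. -/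
def MemAmalgam {d : ℕ} (p q : ℝ) (ω : (Fin d → ℝ) → ℝ) (f : (Fin d → ℝ) → ℂ) : Prop :=
  Measurable f ∧ amalgamNorm p q ω f < ⊤

/-- A Beurling weight: measurable, `ϑ ≥ 1` and submultiplicative. -/
def IsBeurling {d : ℕ} (ϑ : (Fin d → ℝ) → ℝ) : Prop :=
  Measurable ϑ ∧ (∀ x, 1 ≤ ϑ x) ∧ ∀ x y, ϑ (x + y) ≤ ϑ x * ϑ y

/-- The Fourier transform `f̂(ξ) = ∫ f(x) e^{-2πi⟨x,ξ⟩} dx`. -/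
def fourierT {d : ℕ} (f : (Fin d → ℝ) → ℂ) (ξ : Fin d → ℝ) : ℂ :=
  ∫ x : Fin d → ℝ,
    Complex.exp (-(2 * (Real.pi : ℂ) * Complex.I * ∑ i, (x i : ℂ) * (ξ i : ℂ))) * f x

/-- The norm of `A^{p,1,q,r}_{ϑ₁,ϑ₂}(ℝ^d)`. -/
def ANorm {d : ℕ} (p q r : ℝ) (ϑ₁ ϑ₂ : (Fin d → ℝ) → ℝ) (f : (Fin d → ℝ) → ℂ) : ℝ≥0∞ :=
  amalgamNorm p 1 ϑ₁ f + amalgamNorm q r ϑ₂ (fourierT f)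

/-- Membership in `A^{p,1,q,r}_{ϑ₁,ϑ₂}(ℝ^d)`. -/
def MemA {d : ℕ} (p q r : ℝ) (ϑ₁ ϑ₂ : (Fin d → ℝ) → ℝ) (f : (Fin d → ℝ) → ℂ) : Prop :=
  MemAmalgam p 1 ϑ₁ f ∧ MemAmalgam q r ϑ₂ (fourierT f)

/-- Convolution `(f∗g)(x) = ∫ f(x−t)g(t) dt`. -/
def convF {d : ℕ} (f g : (Fin d → ℝ) → ℂ) (x : Fin d → ℝ) : ℂ :=
  ∫ t : Fin d → ℝ, f (x - t) * g t

/-- `ϑ ≺ ϑ'` : domination of weights up to a constant. -/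
def Prec {d : ℕ} (ϑ ϑ' : (Fin d → ℝ) → ℝ) : Prop :=
  ∃ C : ℝ, 0 < C ∧ ∀ x, ϑ x ≤ C * ϑ' x

/-- The Beurling–Domar condition `∑_{n≥1} log ϑ(nx)/n² < ∞`. -/
def BeurlingDomar {d : ℕ} (ϑ : (Fin d → ℝ) → ℝ) : Prop :=
  ∀ x : Fin d → ℝ, Summable fun n : ℕ => Real.log (ϑ ((n : ℝ) • x)) / (n : ℝ) ^ 2

/-- `w` does not tend to zero as `|x| → ∞`. -/
def NotVanishingAtInfty {d : ℕ} (w : (Fin d → ℝ) → ℝ) : Prop :=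
  ∃ δ : ℝ, 0 < δ ∧ ∀ R : ℝ, 0 < R → ∃ x : Fin d → ℝ, R < ‖x‖ ∧ δ ≤ w x

end


lemma aux_minkowski {X T : Type*} [MeasurableSpace X] [MeasurableSpace T]
    (μ : Measure X) (ν : Measure T) [SFinite μ] [SFinite ν] (K : X → T → ℝ≥0∞)
    (hK : Measurable (Function.uncurry K)) {p : ℝ} (hp : 1 < p) :
    (∫⁻ x, (∫⁻ t, K x t ∂ν) ^ p ∂μ) ^ (1 / p) ≤ ∫⁻ t, (∫⁻ x, K x t ^ p ∂μ) ^ (1 / p) ∂ν := by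
  have hp0 : 0 < p := by linarith
  set c : T → ℝ≥0∞ := fun t => (∫⁻ x, K x t ^ p ∂μ) ^ (1 / p) with hc
  have hKp : Measurable (Function.uncurry fun t x => K x t ^ p) :=
    (hK.comp measurable_swap).pow_const p
  have hKt : ∀ t, Measurable fun x => K x t ^ p := fun t => hKp.comp measurable_prodMk_left
  have hcm : Measurable c := (Measurable.lintegral_prod_right hKp).pow_const _
  have hcp : ∀ t, c t ^ p = ∫⁻ x, K x t ^ p ∂μ := by
    intro t
    simp only [hc]
    rw [← ENNReal.rpow_mul, one_div_mul_cancel hp0.ne', ENNReal.rpow_one]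
  by_cases hA : ∫⁻ t, c t ∂ν = ⊤
  · rw [hA]; exact le_top
  have hctop : ∀ᵐ t ∂ν, c t < ⊤ := ae_lt_top hcm hA
  obtain ⟨q, hpq⟩ : ∃ q, p.HolderConjugate q := ⟨_, Real.HolderConjugate.conjExponent hp⟩
  have hq0 : 0 < q := hpq.symm.pos
  have hpq1 : p / q = p - 1 := by
    have := hpq.inv_add_inv_eq_one
    field_simp at this ⊢
    linarith
  have hae : ∀ᵐ x ∂μ, ∀ᵐ t ∂ν, c t = 0 → K x t = 0 := by
    rw [Measure.ae_ae_comm]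
    · refine Eventually.of_forall fun t => ?_
      by_cases h0 : c t = 0
      · have h1 : ∫⁻ x, K x t ^ p ∂μ = 0 := by rw [← hcp, h0, ENNReal.zero_rpow_of_pos hp0]
        rw [lintegral_eq_zero_iff (hKt t)] at h1
        filter_upwards [h1] with x hx _
        simpa [hp0, hp0.le, hp0.not_gt, ENNReal.rpow_eq_zero_iff] using hx
      · exact Eventually.of_forall fun x h => absurd h h0
    · have h1 : MeasurableSet {x : X × T | c x.2 = 0} :=
        (hcm.comp measurable_snd) (measurableSet_singleton 0)
      have h2 : MeasurableSet {x : X × T | K x.1 x.2 = 0} :=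
        hK (measurableSet_singleton 0)
      exact h1.imp h2
  have hpt : ∀ᵐ x ∂μ, (∫⁻ t, K x t ∂ν) ^ p
      ≤ (∫⁻ t, K x t ^ p * c t ^ (-(p - 1)) ∂ν) * (∫⁻ t, c t ∂ν) ^ (p - 1) := by
    filter_upwards [hae] with x hx
    have hKx : Measurable (K x) := hK.comp measurable_prodMk_left
    have e1 : ∫⁻ t, K x t ∂ν ≤
        ∫⁻ t, ((fun t => K x t * c t ^ (-(1 / q))) * (fun t => c t ^ (1 / q))) t ∂ν := by
      refine lintegral_mono_ae ?_
      filter_upwards [hx, hctop] with t h1 h2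
      by_cases h0 : c t = 0
      · rw [h1 h0]; exact zero_le
      · simp only [Pi.mul_apply]
        rw [mul_assoc, ← ENNReal.rpow_add _ _ h0 h2.ne]
        simp
    have e2 := ENNReal.lintegral_mul_le_Lp_mul_Lq ν hpq
      (f := fun t => K x t * c t ^ (-(1 / q))) (g := fun t => c t ^ (1 / q))
      (hKx.mul (hcm.pow_const _)).aemeasurable (hcm.pow_const _).aemeasurable
    have e3 := ENNReal.rpow_le_rpow (e1.trans e2) hp0.le
    refine e3.trans (le_of_eq ?_)
    rw [ENNReal.mul_rpow_of_nonneg _ _ hp0.le, ← ENNReal.rpow_mul, ← ENNReal.rpow_mul,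
      one_div_mul_cancel hp0.ne', ENNReal.rpow_one]
    congr 1
    · refine lintegral_congr fun t => ?_
      rw [ENNReal.mul_rpow_of_nonneg _ _ hp0.le, ← ENNReal.rpow_mul, ← hpq1]
      congr 2; ring
    · rw [← hpq1]
      congr 1
      · refine lintegral_congr fun t => ?_
        rw [← ENNReal.rpow_mul, one_div_mul_cancel hq0.ne', ENNReal.rpow_one]
      · ring
  have hint : ∫⁻ x, (∫⁻ t, K x t ∂ν) ^ p ∂μ ≤ (∫⁻ t, c t ∂ν) ^ p := by
    have hm2 : Measurable (Function.uncurry fun x t => K x t ^ p * c t ^ (-(p - 1))) :=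
      (hK.pow_const p).mul ((hcm.comp measurable_snd).pow_const _)
    calc ∫⁻ x, (∫⁻ t, K x t ∂ν) ^ p ∂μ
        ≤ ∫⁻ x, (∫⁻ t, K x t ^ p * c t ^ (-(p - 1)) ∂ν) * (∫⁻ t, c t ∂ν) ^ (p - 1) ∂μ :=
          lintegral_mono_ae hpt
      _ = (∫⁻ x, ∫⁻ t, K x t ^ p * c t ^ (-(p - 1)) ∂ν ∂μ) * (∫⁻ t, c t ∂ν) ^ (p - 1) :=
          lintegral_mul_const _ (Measurable.lintegral_prod_right hm2)
      _ = (∫⁻ t, ∫⁻ x, K x t ^ p * c t ^ (-(p - 1)) ∂μ ∂ν) * (∫⁻ t, c t ∂ν) ^ (p - 1) := by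
          rw [lintegral_lintegral_swap hm2.aemeasurable]
      _ ≤ (∫⁻ t, c t ∂ν) * (∫⁻ t, c t ∂ν) ^ (p - 1) := by
          gcongr with t
          rw [lintegral_mul_const _ (hKt t), ← hcp]
          by_cases h0 : c t = 0
          · rw [h0, ENNReal.zero_rpow_of_pos hp0, zero_mul]
          by_cases h1 : c t = ⊤
          · rw [h1]; exact le_top
          rw [← ENNReal.rpow_add _ _ h0 h1]
          simp
      _ = (∫⁻ t, c t ∂ν) ^ p := by
          nth_rewrite 1 [← ENNReal.rpow_one (∫⁻ t, c t ∂ν)]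
          rw [← ENNReal.rpow_add_of_nonneg _ _ zero_le_one (by linarith)]
          congr 1; ring
  calc _ ≤ ((∫⁻ t, c t ∂ν) ^ p) ^ (1 / p) := ENNReal.rpow_le_rpow hint (by positivity)
    _ = _ := by rw [← ENNReal.rpow_mul, mul_one_div_cancel hp0.ne', ENNReal.rpow_one]

lemma aux_measurableSet_cube {d : ℕ} (α : Fin d → ℤ) : MeasurableSet (cube α) :=
  MeasurableSet.univ_pi fun _ => measurableSet_Ico

lemma aux_volume_cube {d : ℕ} (α : Fin d → ℤ) : volume (cube α) = 1 := by
  simp [cube, volume_pi_pi]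

lemma aux_mem_cube {d : ℕ} (α : Fin d → ℤ) (x : Fin d → ℝ) :
    x ∈ cube α ↔ ∀ i, ⌊x i⌋ = α i := by
  simp [cube, Int.floor_eq_iff]

lemma aux_lintegral {d : ℕ} (F : (Fin d → ℝ) → ℝ≥0∞) :
    ∫⁻ x, F x = ∑' α : Fin d → ℤ, ∫⁻ x in cube α, F x := by
  rw [← lintegral_iUnion aux_measurableSet_cube]
  · have : (⋃ α : Fin d → ℤ, cube α) = Set.univ := by
      ext x
      simp only [Set.mem_iUnion, Set.mem_univ, iff_true]
      exact ⟨fun i => ⌊x i⌋, (aux_mem_cube _ _).2 fun i => rfl⟩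
    rw [this, Measure.restrict_univ]
  · intro α β hab
    refine Set.disjoint_left.2 fun x hx hy => hab ?_
    funext i
    rw [← (aux_mem_cube _ _).1 hx i, (aux_mem_cube _ _).1 hy i]

lemma aux_L1_le {d : ℕ} {p : ℝ} (hp : 1 < p) (F : (Fin d → ℝ) → ℝ≥0∞) (hF : Measurable F) :
    ∫⁻ x, F x ≤ ∑' α : Fin d → ℤ, eLpNorm F (ENNReal.ofReal p) (volume.restrict (cube α)) := by
  rw [aux_lintegral]
  refine ENNReal.tsum_le_tsum fun α => ?_
  have : IsProbabilityMeasure (volume.restrict (cube α)) :=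
    ⟨by rw [Measure.restrict_apply_univ, aux_volume_cube]⟩
  have h := eLpNorm_le_eLpNorm_of_exponent_le (μ := volume.restrict (cube α)) (f := F)
    (p := 1) (q := ENNReal.ofReal p) (by simpa using hp.le) hF.aestronglyMeasurable
  rwa [eLpNorm_one_eq_lintegral_enorm] at h

lemma aux_tsum_shift {d : ℕ} (u : (Fin d → ℤ) → ℝ≥0∞) (s : Fin d → ℤ) :
    ∑' α : Fin d → ℤ, u (α - s) = ∑' α : Fin d → ℤ, u α :=
  (Equiv.subRight s).tsum_eq u

lemma aux_translate {d : ℕ} {p : ℝ} (hp : 1 < p) (F : (Fin d → ℝ) → ℝ≥0∞) (hF : Measurable F)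
    (t : Fin d → ℝ) :
    ∑' α : Fin d → ℤ, eLpNorm (fun x => F (x - t)) (ENNReal.ofReal p) (volume.restrict (cube α))
      ≤ 2 ^ d * ∑' α : Fin d → ℤ, eLpNorm F (ENNReal.ofReal p) (volume.restrict (cube α)) := by
  set P := ENNReal.ofReal p
  have hP : 1 ≤ P := by simpa [P] using hp.le
  obtain ⟨sh, hsh⟩ : ∃ sh : (Fin d → Fin 2) → (Fin d → ℤ),
      ∀ e i, sh e i = ⌊t i⌋ + ((e i : ℕ) : ℤ) := ⟨_, fun _ _ => rfl⟩
  have key : ∀ α : Fin d → ℤ, eLpNorm (fun x => F (x - t)) P (volume.restrict (cube α))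
      ≤ ∑ e : Fin d → Fin 2, eLpNorm F P (volume.restrict (cube (α - sh e))) := by
    intro α
    have hmp : MeasurePreserving (fun x : Fin d → ℝ => x - t) volume volume :=
      measurePreserving_sub_right volume t
    have hi : ∀ e, Measurable ((cube (α - sh e)).indicator F) := fun e =>
      hF.indicator (aux_measurableSet_cube _)
    have hterm : ∀ e, eLpNorm (fun x => (cube (α - sh e)).indicator F (x - t)) P volume
        = eLpNorm F P (volume.restrict (cube (α - sh e))) := by
      intro e
      have h2 : eLpNorm (((cube (α - sh e)).indicator F) ∘ (fun x : Fin d → ℝ => x - t)) P volume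
          = eLpNorm ((cube (α - sh e)).indicator F) P volume :=
        eLpNorm_comp_measurePreserving (hi e).aestronglyMeasurable hmp
      exact h2.trans (eLpNorm_indicator_eq_eLpNorm_restrict (aux_measurableSet_cube _))
    calc eLpNorm (fun x => F (x - t)) P (volume.restrict (cube α))
        = eLpNorm ((cube α).indicator (fun x => F (x - t))) P volume :=
          (eLpNorm_indicator_eq_eLpNorm_restrict (aux_measurableSet_cube α)).symm
      _ ≤ eLpNorm (∑ e : Fin d → Fin 2, (fun x => (cube (α - sh e)).indicator F (x - t))) P
            volume := by
          refine eLpNorm_mono_enorm fun x => ?_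
          simp only [enorm_eq_self, Finset.sum_apply]
          by_cases hx : x ∈ cube α
          · rw [Set.indicator_of_mem hx]
            have hex : ∃ e : Fin d → Fin 2, x - t ∈ cube (α - sh e) := by
              rw [aux_mem_cube] at hx
              have : ∀ i, ∃ e : Fin 2, ⌊x i - t i⌋ = α i - (⌊t i⌋ + ((e : ℕ) : ℤ)) := by
                intro i
                have h1 := Int.floor_eq_iff.1 (hx i)
                have h2 := Int.floor_le (t i)
                have h3 := Int.lt_floor_add_one (t i)
                by_cases h : ((α i - ⌊t i⌋ : ℤ) : ℝ) ≤ x i - t i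
                · refine ⟨0, ?_⟩
                  rw [Int.floor_eq_iff]
                  push_cast at h ⊢
                  simp only [Fin.val_zero]
                  constructor <;> push_cast <;> linarith
                · refine ⟨1, ?_⟩
                  rw [Int.floor_eq_iff]
                  push_cast at h ⊢
                  simp only [Fin.val_one]
                  constructor <;> push_cast <;> linarith
              choose e he using this
              exact ⟨e, (aux_mem_cube _ _).2 fun i => by
                rw [Pi.sub_apply, Pi.sub_apply, hsh]; exact he i⟩
            obtain ⟨e, he⟩ := hex
            refine le_trans (le_of_eq ?_) (Finset.single_le_sum (fun _ _ => zero_le)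
              (Finset.mem_univ e))
            rw [Set.indicator_of_mem he]
          · rw [Set.indicator_of_notMem hx]; exact zero_le
      _ ≤ ∑ e : Fin d → Fin 2, eLpNorm (fun x => (cube (α - sh e)).indicator F (x - t)) P
            volume :=
          eLpNorm_sum_le (fun e _ => ((hi e).comp hmp.measurable).aestronglyMeasurable) hP
      _ = ∑ e : Fin d → Fin 2, eLpNorm F P (volume.restrict (cube (α - sh e))) :=
          Finset.sum_congr rfl fun e _ => hterm e
  calc _ ≤ ∑' α : Fin d → ℤ, ∑ e : Fin d → Fin 2,
        eLpNorm F P (volume.restrict (cube (α - sh e))) := ENNReal.tsum_le_tsum key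
    _ = ∑ e : Fin d → Fin 2, ∑' α : Fin d → ℤ,
        eLpNorm F P (volume.restrict (cube (α - sh e))) :=
        Summable.tsum_finsetSum fun _ _ => ENNReal.summable
    _ = ∑ e : Fin d → Fin 2, ∑' α : Fin d → ℤ, eLpNorm F P (volume.restrict (cube α)) := by
        refine Finset.sum_congr rfl fun e _ => ?_
        exact aux_tsum_shift (fun α => eLpNorm F P (volume.restrict (cube α))) (sh e)
    _ = _ := by
        rw [Finset.sum_const, Finset.card_univ, nsmul_eq_mul]
        simp only [Fintype.card_pi, Fintype.card_fin, Finset.prod_const, Finset.card_univ,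
          Nat.cast_pow, Nat.cast_ofNat]

/-- The convolution estimate in the amalgam space. -/
lemma aux_conv {d : ℕ} {p : ℝ} (hp : 1 < p) (F G : (Fin d → ℝ) → ℝ≥0∞) (hF : Measurable F)
    (hG : Measurable G) :
    ∑' α : Fin d → ℤ, eLpNorm (fun x => ∫⁻ t, F (x - t) * G t) (ENNReal.ofReal p)
        (volume.restrict (cube α))
      ≤ 2 ^ d * (∑' α : Fin d → ℤ, eLpNorm F (ENNReal.ofReal p) (volume.restrict (cube α))) *
        ∑' α : Fin d → ℤ, eLpNorm G (ENNReal.ofReal p) (volume.restrict (cube α)) := by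
  have hp0 : 0 < p := by linarith
  have hPr : (ENNReal.ofReal p).toReal = p := ENNReal.toReal_ofReal hp0.le
  have hP0 : ENNReal.ofReal p ≠ 0 := by simpa using hp0
  have hm : Measurable (Function.uncurry fun (x t : Fin d → ℝ) => F (x - t)) :=
    hF.comp (measurable_fst.sub measurable_snd)
  have hm' : Measurable (Function.uncurry fun (t x : Fin d → ℝ) => F (x - t)) :=
    hF.comp (measurable_snd.sub measurable_fst)
  have form : ∀ (H : (Fin d → ℝ) → ℝ≥0∞) (α : Fin d → ℤ),
      eLpNorm H (ENNReal.ofReal p) (volume.restrict (cube α))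
        = (∫⁻ x in cube α, H x ^ p) ^ (1 / p) := by
    intro H α
    rw [eLpNorm_eq_lintegral_rpow_enorm_toReal hP0 ENNReal.ofReal_ne_top, hPr]
    rfl
  have key : ∀ α : Fin d → ℤ, eLpNorm (fun x => ∫⁻ t, F (x - t) * G t) (ENNReal.ofReal p)
        (volume.restrict (cube α)) ≤ ∫⁻ t, eLpNorm (fun x => F (x - t)) (ENNReal.ofReal p)
        (volume.restrict (cube α)) * G t := by
    intro α
    simp only [form]
    refine (aux_minkowski (volume.restrict (cube α)) volume (fun x t => F (x - t) * G t)
      (hm.mul (hG.comp measurable_snd)) hp).trans (le_of_eq ?_)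
    refine lintegral_congr fun t => ?_
    simp_rw [ENNReal.mul_rpow_of_nonneg _ _ hp0.le]
    have hFt : Measurable fun x => F (x - t) ^ p :=
      (hF.comp (measurable_id.sub_const t)).pow_const p
    rw [lintegral_mul_const _ hFt,
      ENNReal.mul_rpow_of_nonneg _ _ (by positivity), ← ENNReal.rpow_mul,
      mul_one_div_cancel hp0.ne', ENNReal.rpow_one]
  calc _ ≤ ∑' α : Fin d → ℤ, ∫⁻ t, eLpNorm (fun x => F (x - t)) (ENNReal.ofReal p)
        (volume.restrict (cube α)) * G t := ENNReal.tsum_le_tsum key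
    _ = ∫⁻ t, ∑' α : Fin d → ℤ, eLpNorm (fun x => F (x - t)) (ENNReal.ofReal p)
        (volume.restrict (cube α)) * G t := by
        rw [lintegral_tsum]
        intro α
        simp only [form]
        exact (((Measurable.lintegral_prod_right (hm'.pow_const p)).pow_const _).mul hG).aemeasurable
    _ ≤ ∫⁻ t, (2 ^ d * (∑' α : Fin d → ℤ, eLpNorm F (ENNReal.ofReal p)
          (volume.restrict (cube α)))) * G t := by
        refine lintegral_mono fun t => ?_
        rw [ENNReal.tsum_mul_right]
        gcongr
        exact aux_translate hp F hF t
    _ ≤ _ := by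
        rw [lintegral_const_mul _ hG]
        gcongr
        exact aux_L1_le hp G hG

lemma aux_amalgam_one {d : ℕ} (p : ℝ) (ω : (Fin d → ℝ) → ℝ) (f : (Fin d → ℝ) → ℂ) :
    amalgamNorm p 1 ω f = ∑' α : Fin d → ℤ,
      eLpNorm (fun x => ‖ω x • f x‖ₑ) (ENNReal.ofReal p) (volume.restrict (cube α)) := by
  simp only [amalgamNorm, ENNReal.rpow_one, one_div, inv_one, eLpNorm_enorm]

lemma aux_amalgam_conv {d : ℕ} {p : ℝ} (hp : 1 < p) (ϑ : (Fin d → ℝ) → ℝ) (h : IsBeurling ϑ)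
    (f g : (Fin d → ℝ) → ℂ) (hf : Measurable f) (hg : Measurable g) :
    amalgamNorm p 1 ϑ (convF f g) ≤ 2 ^ d * amalgamNorm p 1 ϑ f * amalgamNorm p 1 ϑ g := by
  simp only [aux_amalgam_one]
  refine le_trans (ENNReal.tsum_le_tsum fun α => ?_)
    (aux_conv hp _ _ (h.1.smul hf).enorm (h.1.smul hg).enorm)
  refine eLpNorm_mono_enorm fun x => ?_
  simp only [enorm_eq_self, enorm_smul]
  calc ‖ϑ x‖ₑ * ‖convF f g x‖ₑ ≤ ‖ϑ x‖ₑ * ∫⁻ t, ‖f (x - t) * g t‖ₑ := by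
        gcongr; exact enorm_integral_le_lintegral_enorm _
    _ = ∫⁻ t, ‖ϑ x‖ₑ * ‖f (x - t) * g t‖ₑ := by
        rw [lintegral_const_mul]
        exact ((hf.comp (measurable_const.sub measurable_id)).mul hg).enorm
    _ ≤ _ := by
        refine lintegral_mono fun t => ?_
        have e : ‖ϑ x‖ₑ ≤ ‖ϑ (x - t)‖ₑ * ‖ϑ t‖ₑ := by
          rw [← enorm_mul]
          have h3 := h.2.2 (x - t) t
          rw [sub_add_cancel] at h3
          have h4 := h.2.1 x
          have h5 : ‖ϑ x‖ ≤ ‖ϑ (x - t) * ϑ t‖ := by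
            rw [Real.norm_of_nonneg (by linarith), Real.norm_of_nonneg (by linarith)]
            exact h3
          exact enorm_le_iff_norm_le.2 h5
        dsimp only
        rw [enorm_mul]
        calc _ ≤ (‖ϑ (x - t)‖ₑ * ‖ϑ t‖ₑ) * (‖f (x - t)‖ₑ * ‖g t‖ₑ) := by gcongr
          _ = _ := by ring

lemma aux_L1_le_amalgam {d : ℕ} {p : ℝ} (hp : 1 < p) (ϑ : (Fin d → ℝ) → ℝ) (h : IsBeurling ϑ)
    (f : (Fin d → ℝ) → ℂ) (hf : Measurable f) :
    ∫⁻ x, ‖f x‖ₑ ≤ amalgamNorm p 1 ϑ f := by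
  rw [aux_amalgam_one]
  refine le_trans (lintegral_mono fun x => ?_) (aux_L1_le hp _ (h.1.smul hf).enorm)
  rw [enorm_smul]
  refine le_mul_of_one_le_left zero_le ?_
  have h4 := h.2.1 x
  have h5 : ‖(1 : ℝ)‖ ≤ ‖ϑ x‖ := by
    rw [norm_one, Real.norm_of_nonneg (by linarith)]; exact h4
  simpa using enorm_le_iff_norm_le.2 h5

lemma aux_measurable_conv {d : ℕ} (f g : (Fin d → ℝ) → ℂ) (hf : Measurable f)
    (hg : Measurable g) : Measurable (convF f g) := by
  have : StronglyMeasurable (Function.uncurry fun (x t : Fin d → ℝ) => f (x - t) * g t) :=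
    ((hf.comp (measurable_fst.sub measurable_snd)).mul (hg.comp measurable_snd)).stronglyMeasurable
  exact this.integral_prod_right.measurable

lemma aux_norm_exp {d : ℕ} (x ξ : Fin d → ℝ) :
    ‖Complex.exp (-(2 * (Real.pi : ℂ) * Complex.I * ∑ i, (x i : ℂ) * (ξ i : ℂ)))‖ = 1 := by
  have : (-(2 * (Real.pi : ℂ) * Complex.I * ∑ i, (x i : ℂ) * (ξ i : ℂ)))
      = ((-(2 * Real.pi * ∑ i, x i * ξ i) : ℝ) : ℂ) * Complex.I := by
    push_cast; ring
  rw [this, Complex.norm_exp_ofReal_mul_I]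

lemma aux_enorm_fourier {d : ℕ} (f : (Fin d → ℝ) → ℂ) (ξ : Fin d → ℝ) :
    ‖fourierT f ξ‖ₑ ≤ ∫⁻ x, ‖f x‖ₑ := by
  refine (enorm_integral_le_lintegral_enorm _).trans (le_of_eq ?_)
  refine lintegral_congr fun x => ?_
  rw [enorm_mul, ← ofReal_norm, aux_norm_exp]
  simp

lemma aux_fourier_conv {d : ℕ} (f g : (Fin d → ℝ) → ℂ) (hf : Integrable f)
    (hg : Integrable g) (ξ : Fin d → ℝ) :
    fourierT (convF f g) ξ = fourierT f ξ * fourierT g ξ := by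
  set e : (Fin d → ℝ) → ℂ := fun x =>
    Complex.exp (-(2 * (Real.pi : ℂ) * Complex.I * ∑ i, (x i : ℂ) * (ξ i : ℂ))) with he
  have hec : Continuous e := by fun_prop
  have heb : ∀ x, ‖e x‖ ≤ 1 := fun x => (aux_norm_exp x ξ).le
  have hadd : ∀ x t, e x = e (x - t) * e t := by
    intro x t
    simp only [he]
    rw [← Complex.exp_add]
    congr 1
    simp only [Pi.sub_apply, Complex.ofReal_sub, sub_mul, Finset.sum_sub_distrib]
    ring
  have hef : Integrable (fun x => e x * f x) :=
    hf.bdd_mul hec.aestronglyMeasurable (Eventually.of_forall heb)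
  have heg : Integrable (fun x => e x * g x) :=
    hg.bdd_mul hec.aestronglyMeasurable (Eventually.of_forall heb)
  have h := integral_convolution (μ := (volume : Measure (Fin d → ℝ))) (ν := volume)
    (ContinuousLinearMap.mul ℝ ℂ) heg hef
  simp only [ContinuousLinearMap.mul_apply'] at h
  change ∫ x, e x * convF f g x = (∫ x, e x * f x) * ∫ x, e x * g x
  rw [mul_comm, ← h]
  refine integral_congr_ae (Eventually.of_forall fun x => ?_)
  simp only [convF, convolution, ContinuousLinearMap.mul_apply']
  rw [← integral_const_mul]
  refine integral_congr_ae (Eventually.of_forall fun t => ?_)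
  simp only
  rw [hadd x t]; ring

lemma aux_amalgam_bdd_mul {d : ℕ} {q r : ℝ} (hr : 1 < r) (ω : (Fin d → ℝ) → ℝ)
    (u v : (Fin d → ℝ) → ℂ) (M : ℝ≥0∞) (hM : M ≠ ⊤) (hu : ∀ x, ‖u x‖ₑ ≤ M) :
    amalgamNorm q r ω (fun x => u x * v x) ≤ M * amalgamNorm q r ω v := by
  lift M to ℝ≥0 using hM
  have hr0 : 0 < r := by linarith
  have key : ∀ α : Fin d → ℤ,
      eLpNorm (fun x => ω x • (u x * v x)) (ENNReal.ofReal q) (volume.restrict (cube α))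
      ≤ M * eLpNorm (fun x => ω x • v x) (ENNReal.ofReal q) (volume.restrict (cube α)) := by
    intro α
    have := eLpNorm_le_nnreal_smul_eLpNorm_of_ae_le_mul (μ := volume.restrict (cube α))
      (f := fun x => ω x • (u x * v x)) (g := fun x => ω x • v x) (c := M)
      (Eventually.of_forall fun x => by
        have h1 : ‖u x‖₊ ≤ M := by simpa [enorm_eq_nnnorm] using hu x
        rw [nnnorm_smul, nnnorm_mul, nnnorm_smul]
        calc _ ≤ ‖ω x‖₊ * (M * ‖v x‖₊) := by gcongr
          _ = _ := by ring) (ENNReal.ofReal q)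
    simpa [ENNReal.smul_def] using this
  calc amalgamNorm q r ω (fun x => u x * v x)
      ≤ (∑' α : Fin d → ℤ, (M * eLpNorm (fun x => ω x • v x) (ENNReal.ofReal q)
          (volume.restrict (cube α))) ^ r) ^ (1 / r) := by
        refine ENNReal.rpow_le_rpow (ENNReal.tsum_le_tsum fun α => ?_) (by positivity)
        exact ENNReal.rpow_le_rpow (key α) hr0.le
    _ = _ := by
        simp_rw [ENNReal.mul_rpow_of_nonneg _ _ hr0.le]
        rw [ENNReal.tsum_mul_left, ENNReal.mul_rpow_of_nonneg _ _ (by positivity),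
          ← ENNReal.rpow_mul, mul_one_div_cancel hr0.ne', ENNReal.rpow_one]
        rfl

/-- for `1 < p,q,r < ∞`, `A^{p,1,q,r}_{ϑ₁,ϑ₂}(ℝ^d)` is a Banach algebra
under convolution. -/
theorem A_banach_algebra {d : ℕ} (p q r : ℝ) (hp : 1 < p) (hq : 1 < q) (hr : 1 < r)
    (ϑ₁ ϑ₂ : (Fin d → ℝ) → ℝ) (h1 : IsBeurling ϑ₁) (h2 : IsBeurling ϑ₂) :
    ∃ C : ℝ, 1 ≤ C ∧ ∀ f g : (Fin d → ℝ) → ℂ,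
      MemA p q r ϑ₁ ϑ₂ f → MemA p q r ϑ₁ ϑ₂ g →
        MemA p q r ϑ₁ ϑ₂ (convF f g) ∧
        ANorm p q r ϑ₁ ϑ₂ (convF f g) ≤
          ENNReal.ofReal C * ANorm p q r ϑ₁ ϑ₂ f * ANorm p q r ϑ₁ ϑ₂ g := by

  refine ⟨2 ^ d, one_le_pow₀ one_le_two, ?_⟩
  rintro f g ⟨⟨hf, hfN⟩, ⟨hf', hfN'⟩⟩ ⟨⟨hg, hgN⟩, ⟨hg', hgN'⟩⟩
  have hfi : Integrable f :=
    ⟨hf.aestronglyMeasurable, (aux_L1_le_amalgam hp ϑ₁ h1 f hf).trans_lt hfN⟩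
  have hgi : Integrable g :=
    ⟨hg.aestronglyMeasurable, (aux_L1_le_amalgam hp ϑ₁ h1 g hg).trans_lt hgN⟩
  have hF : fourierT (convF f g) = fun ξ => fourierT f ξ * fourierT g ξ :=
    funext (aux_fourier_conv f g hfi hgi)
  have e1 := aux_amalgam_conv hp ϑ₁ h1 f g hf hg
  have e2 : amalgamNorm q r ϑ₂ (fourierT (convF f g))
      ≤ amalgamNorm p 1 ϑ₁ f * amalgamNorm q r ϑ₂ (fourierT g) := by
    rw [hF]
    exact aux_amalgam_bdd_mul hr ϑ₂ _ _ _ hfN.ne fun ξ =>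
      (aux_enorm_fourier f ξ).trans (aux_L1_le_amalgam hp ϑ₁ h1 f hf)
  have h2d : (2 : ℝ≥0∞) ^ d < ⊤ := ENNReal.pow_lt_top (by simp)
  refine ⟨⟨⟨aux_measurable_conv f g hf hg, e1.trans_lt ?_⟩, ⟨?_, e2.trans_lt ?_⟩⟩, ?_⟩
  · exact ENNReal.mul_lt_top (ENNReal.mul_lt_top h2d hfN) hgN
  · rw [hF]; exact hf'.mul hg'
  · exact ENNReal.mul_lt_top hfN hgN'
  · have hC : ENNReal.ofReal ((2 : ℝ) ^ d) = 2 ^ d := by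
      rw [ENNReal.ofReal_pow (by norm_num)]; simp
    rw [hC]
    have h2d1 : (1 : ℝ≥0∞) ≤ 2 ^ d := one_le_pow₀ (by norm_num)
    unfold ANorm
    calc _ ≤ 2 ^ d * amalgamNorm p 1 ϑ₁ f * amalgamNorm p 1 ϑ₁ g
          + amalgamNorm p 1 ϑ₁ f * amalgamNorm q r ϑ₂ (fourierT g) := add_le_add e1 e2
      _ ≤ 2 ^ d * amalgamNorm p 1 ϑ₁ f * amalgamNorm p 1 ϑ₁ g
          + 2 ^ d * amalgamNorm p 1 ϑ₁ f * amalgamNorm q r ϑ₂ (fourierT g) := by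
          gcongr
          exact le_mul_of_one_le_left zero_le h2d1
      _ = 2 ^ d * amalgamNorm p 1 ϑ₁ f *
          (amalgamNorm p 1 ϑ₁ g + amalgamNorm q r ϑ₂ (fourierT g)) := by ring
      _ ≤ _ := by
          gcongr
          exact le_self_add
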